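/- Let 0 < σ < 1, let θ be a nonzero real number, and let r < s be real numbers. Then (1/Γ(σ)) ∫_r^s (s−λ)^{σ−1} E_σ(θ (λ−r)^σ) dλ = (1/θ) ( E_σ(θ (s−r)^σ) − 1 ). -/

import Mathlib

/-- The Mittag-Leffler function `E_σ(t) = Σ_{b ≥ 0} t^b / Γ(bσ + 1)`. -/
noncomputable def mittagLeffler (σ t : ℝ) : ℝ :=
  ∑' b : ℕ, t ^ b / Real.Gamma (b * σ + 1)

open MeasureTheory Set in
theorem rpow_mul_exp_neg_le_Gamma_add_one {A x : ℝ} (hA : 0 ≤ A) (hx : 0 ≤ x) :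
    A ^ x * Real.exp (-A) ≤ Real.Gamma (x + 1) := by
  have hint : IntegrableOn (fun t : ℝ => Real.exp (-t) * t ^ (x + 1 - 1)) (Ioi 0) :=
    Real.GammaIntegral_convergent (by linarith)
  have hsub : Ioi A ⊆ Ioi (0 : ℝ) := Ioi_subset_Ioi hA
  rw [Real.Gamma_eq_integral (by linarith), ← integral_exp_neg_Ioi, ← integral_const_mul]
  calc ∫ t in Ioi A, A ^ x * Real.exp (-t)
      ≤ ∫ t in Ioi A, Real.exp (-t) * t ^ (x + 1 - 1) := by
        refine setIntegral_mono_on ((integrableOn_exp_neg_Ioi A).const_mul _)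
          (hint.mono_set hsub) measurableSet_Ioi fun t ht => ?_
        rw [mul_comm, add_sub_cancel_right]
        gcongr
        exact le_of_lt ht
    _ ≤ ∫ t in Ioi 0, Real.exp (-t) * t ^ (x + 1 - 1) := by
        refine setIntegral_mono_set hint ?_ hsub.eventuallyLE
        filter_upwards [ae_restrict_mem measurableSet_Ioi] with t ht
        exact mul_nonneg (Real.exp_pos _).le (Real.rpow_nonneg (le_of_lt ht) _)

theorem summable_mittagLeffler {σ : ℝ} (hσ : 0 < σ) (t : ℝ) :
    Summable fun b : ℕ => t ^ b / Real.Gamma (b * σ + 1) := by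
  set M : ℝ := 2 * (|t| + 1) with hM
  have hM0 : 0 < M := by positivity
  set A : ℝ := M ^ σ⁻¹ with hA
  have hA0 : 0 ≤ A := Real.rpow_nonneg hM0.le _
  have hAM (b : ℕ) : A ^ (b * σ) = M ^ b := by
    rw [hA, ← Real.rpow_mul hM0.le, mul_left_comm, inv_mul_cancel₀ hσ.ne', mul_one,
      Real.rpow_natCast]
  have hq : |t| / M < 1 := by
    rw [div_lt_one hM0]
    linarith [abs_nonneg t]
  refine Summable.of_norm_bounded
    ((summable_geometric_of_lt_one (by positivity) hq).mul_left (Real.exp A)) fun b => ?_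
  have hΓ := rpow_mul_exp_neg_le_Gamma_add_one hA0 (x := b * σ) (by positivity)
  rw [hAM] at hΓ
  have hΓ0 : 0 < Real.Gamma (b * σ + 1) := Real.Gamma_pos_of_pos (by positivity)
  rw [norm_div, norm_pow, Real.norm_eq_abs, Real.norm_of_nonneg hΓ0.le]
  calc |t| ^ b / Real.Gamma (b * σ + 1) ≤ |t| ^ b / (M ^ b * Real.exp (-A)) := by gcongr
    _ = Real.exp A * (|t| / M) ^ b := by
      rw [Real.exp_neg, div_pow]
      field_simp

theorem integral_sub_rpow_mul_sub_rpow {u v r s : ℝ} (hu : 0 < u) (hv : 0 < v) (hrs : r < s) :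
    ∫ l in r..s, (s - l) ^ (v - 1) * (l - r) ^ (u - 1) =
      (s - r) ^ (u + v - 1) * (Real.Gamma u * Real.Gamma v / Real.Gamma (u + v)) := by
  have ha : 0 < s - r := sub_pos.2 hrs
  have hshift := intervalIntegral.integral_comp_sub_right (a := r) (b := s)
    (fun x : ℝ => (s - r - x) ^ (v - 1) * x ^ (u - 1)) r
  simp only [sub_sub_sub_cancel_right, sub_self] at hshift
  rw [hshift]
  have hbeta := Complex.betaIntegral_scaled u v ha
  rw [Complex.betaIntegral_eq_Gamma_mul_div _ _ (by simpa) (by simpa)] at hbeta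
  apply Complex.ofReal_injective
  rw [← intervalIntegral.integral_ofReal]
  push_cast
  rw [Complex.ofReal_cpow ha.le, ← Complex.Gamma_ofReal, ← Complex.Gamma_ofReal,
    ← Complex.Gamma_ofReal]
  push_cast at hbeta ⊢
  rw [← hbeta]
  refine intervalIntegral.integral_congr fun x hx => ?_
  rw [Set.uIcc_of_le ha.le] at hx
  rw [Complex.ofReal_cpow hx.1, Complex.ofReal_cpow (by linarith [hx.2]), mul_comm]
  push_cast
  rfl

theorem hasSum_integral_sub_rpow_mul_mittagLeffler {σ r s : ℝ} (θ : ℝ) (hσ : 0 < σ)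
    (hrs : r < s) :
    HasSum (fun b : ℕ => ∫ l in r..s,
        (s - l) ^ (σ - 1) * ((θ * (l - r) ^ σ) ^ b / Real.Gamma (b * σ + 1)))
      (∫ l in r..s, (s - l) ^ (σ - 1) * mittagLeffler σ (θ * (l - r) ^ σ)) := by
  have hsum := summable_mittagLeffler hσ (|θ| * (s - r) ^ σ)
  refine intervalIntegral.hasSum_integral_of_dominated_convergence
    (fun b l => (s - l) ^ (σ - 1) * ((|θ| * (s - r) ^ σ) ^ b / Real.Gamma (b * σ + 1)))
    (fun b => Measurable.aestronglyMeasurable (by fun_prop)) (fun b => .of_forall ?_)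
    (.of_forall fun l _ => hsum.mul_left _) ?_
    (.of_forall fun l _ => (summable_mittagLeffler hσ _).hasSum.mul_left _)
  · intro l hl
    rw [Set.uIoc_of_le hrs.le] at hl
    have hlr : 0 ≤ l - r := by linarith [hl.1]
    have hsl : 0 ≤ s - l := by linarith [hl.2]
    have hΓ : 0 < Real.Gamma (b * σ + 1) := Real.Gamma_pos_of_pos (by positivity)
    rw [norm_mul, norm_div, norm_pow, norm_mul, Real.norm_of_nonneg hΓ.le,
      Real.norm_of_nonneg (Real.rpow_nonneg hsl _), Real.norm_of_nonneg (Real.rpow_nonneg hlr _),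
      Real.norm_eq_abs]
    gcongr
    exact hl.2
  · simp only [tsum_mul_left]
    refine IntervalIntegrable.mul_const ?_ _
    have h := (intervalIntegral.intervalIntegrable_rpow' (a := s - r) (b := 0) (r := σ - 1)
      (by linarith)).comp_sub_left s
    simpa using h

/-- For `0 < σ < 1`, `θ ≠ 0` and `r < s`, one has
`(1/Γ(σ)) ∫_r^s (s−λ)^{σ−1} E_σ(θ (λ−r)^σ) dλ = (1/θ)(E_σ(θ (s−r)^σ) − 1)`. -/
theorem mittagLeffler_fractional_integral (σ θ r s : ℝ) (hσ0 : 0 < σ) (hσ1 : σ < 1)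
    (hθ : θ ≠ 0) (hrs : r < s) :
    (1 / Real.Gamma σ) *
        ∫ l in r..s, (s - l) ^ (σ - 1) * mittagLeffler σ (θ * (l - r) ^ σ) =
      (1 / θ) * (mittagLeffler σ (θ * (s - r) ^ σ) - 1) := by
  have hsum := summable_mittagLeffler hσ0 (θ * (s - r) ^ σ)
  have htail : mittagLeffler σ (θ * (s - r) ^ σ) - 1 =
      ∑' b : ℕ, (θ * (s - r) ^ σ) ^ (b + 1) / Real.Gamma ((b + 1 : ℕ) * σ + 1) := by
    rw [mittagLeffler, hsum.tsum_eq_zero_add]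
    simp
  rw [htail, ← (hasSum_integral_sub_rpow_mul_mittagLeffler θ hσ0 hrs).tsum_eq,
    ← tsum_mul_left, ← tsum_mul_left]
  refine tsum_congr fun b => ?_
  have ha : 0 < s - r := sub_pos.2 hrs
  have hu : 0 < b * σ + 1 := by positivity
  have hbeta : ∫ l in r..s, (s - l) ^ (σ - 1) * ((θ * (l - r) ^ σ) ^ b / Real.Gamma (b * σ + 1)) =
      θ ^ b / Real.Gamma (b * σ + 1) *
        ∫ l in r..s, (s - l) ^ (σ - 1) * (l - r) ^ (b * σ + 1 - 1) := by
    rw [← intervalIntegral.integral_const_mul]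
    refine intervalIntegral.integral_congr fun l hl => ?_
    rw [Set.uIcc_of_le hrs.le] at hl
    rw [add_sub_cancel_right, mul_comm (b : ℝ) σ, Real.rpow_mul_natCast (by linarith [hl.1])]
    ring
  have hpow : (s - r) ^ (b * σ + 1 + σ - 1) = ((s - r) ^ σ) ^ (b + 1) := by
    rw [← Real.rpow_mul_natCast ha.le]
    push_cast
    ring_nf
  have hΓarg : b * σ + 1 + σ = (b + 1 : ℕ) * σ + 1 := by
    push_cast
    ring
  rw [hbeta, integral_sub_rpow_mul_sub_rpow hu hσ0 hrs, hpow, hΓarg]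
  have hΓσ := (Real.Gamma_pos_of_pos hσ0).ne'
  have hΓu := (Real.Gamma_pos_of_pos hu).ne'
  field_simp
  ring
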